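/- arXiv:2111.07855 — 4 statements merged into one kernel-verified Lean document; each statement's English description precedes it below -/
import Mathlib

section
/- Let d ≥ 1, b ∈ ℝ, and a ∈ ℝ^d with 0 ≤ a_1 ≤ a_2 ≤ … ≤ a_d. Then the convex hull of F equals the set of all (θ, x) ∈ ℝ × [0,1]^d satisfying θ ≥ a_{i_1} x_{i_1} + ∑_{k=2}^m (a_{i_k} − a_{i_{k−1}}) x_{i_k} + b for every finite increasing sequence of indices 1 ≤ i_1 < i_2 < … < i_m = d. -/
/-!
The mixing inequality attached to an index sequence bounds `θ - b` below by the linear form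
`mixing c z`, where `c` and `z` are the restrictions of `a` and `x` to the sequence.

*Validity.* At a 0/1 point the sum telescopes: it is at most the value `c k` at the last `k` with
`z k = 1` (`mixing_le`). The described set is convex, so it contains the hull.

*Sufficiency.* A point `x` of the cube is the average over `t ∈ (0, 1]` of its threshold vectors
`(1[t ≤ x i])_i`, hence lies in the convex hull of the 0/1 vectors whose coordinates are ordered
compatibly with those of `x` (`mem_convexHull_thresholdVectors`). Let the sequence consist of the
records of `x` read from the right: the indices `i` with `x j < x i` for all `j > i`. For a
compatible 0/1 vector `y` with `y j = 1`, some record `i ≥ j` has `x i ≥ x j`, and every record up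
to `i` then has `y = 1`, so the mixing expression of `y` is at least `a j` (`le_mixing`). Thus the affine map
`y ↦ (mixing y + r, y)`, with `r ≥ b` chosen so that `x` is sent to `(θ, x)`, sends every compatible
vector into `F`, and so sends `x` into the hull of `F`.
-/

/-- The mixing expression `c₀ z₀ + ∑ (cₖ₊₁ - cₖ) zₖ₊₁`. -/
def mixing {m : ℕ} (c z : Fin (m + 1) → ℝ) : ℝ :=
  c 0 * z 0 + ∑ k : Fin m, (c k.succ - c k.castSucc) * z k.succ

lemma mixing_succ {m : ℕ} (c z : Fin (m + 2) → ℝ) :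
    mixing c z = mixing (fun k : Fin (m + 1) => c k.castSucc) (fun k => z k.castSucc)
      + (c (Fin.last _) - c (Fin.last m).castSucc) * z (Fin.last _) := by
  simp only [mixing, Fin.sum_univ_castSucc (n := m)]
  simp only [Fin.succ_castSucc, Fin.succ_last, Fin.castSucc_zero]
  ring

lemma mixing_comb {m : ℕ} (c z w : Fin (m + 1) → ℝ) (s t : ℝ) :
    mixing c (fun k => s * z k + t * w k) = s * mixing c z + t * mixing c w := by
  simp only [mixing, mul_add, Finset.sum_add_distrib, Finset.mul_sum]
  simp only [mul_left_comm]
  ring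

lemma mixing_le_last {m : ℕ} (c z : Fin (m + 1) → ℝ) (hc : Monotone c) (h0 : 0 ≤ c 0)
    (hz : ∀ k, z k ≤ 1) : mixing c z ≤ c (Fin.last m) := by
  induction m with
  | zero => simpa [mixing] using mul_le_mul_of_nonneg_left (hz 0) h0
  | succ m ih =>
    rw [mixing_succ]
    have h1 := ih (fun k => c k.castSucc) (fun k => z k.castSucc)
      (hc.comp Fin.strictMono_castSucc.monotone) h0 (fun k => hz _)
    have h2 : c (Fin.last m).castSucc ≤ c (Fin.last _) := hc (Fin.le_last _)
    have h3 := mul_le_mul_of_nonneg_left (hz (Fin.last _)) (sub_nonneg.2 h2)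
    linarith

lemma mixing_le {m : ℕ} (c z : Fin (m + 1) → ℝ) (hc : Monotone c) (h0 : 0 ≤ c 0)
    (hz : ∀ k, z k = 0 ∨ z k = 1) (B : ℝ) (hB : ∀ k, c k * z k ≤ B) : mixing c z ≤ B := by
  induction m with
  | zero => simpa [mixing] using hB 0
  | succ m ih =>
    rcases hz (Fin.last _) with h | h
    · rw [mixing_succ, h, mul_zero, add_zero]
      exact ih _ _ (hc.comp Fin.strictMono_castSucc.monotone) h0 (fun k => hz _) (fun k => hB _)
    · have h1 := mixing_le_last c z hc h0 (fun k => by rcases hz k with h | h <;> simp [h])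
      have h2 := hB (Fin.last _)
      rw [h, mul_one] at h2
      exact h1.trans h2

lemma le_mixing {m : ℕ} (c z : Fin (m + 1) → ℝ) (hc : Monotone c)
    (hz : ∀ k, 0 ≤ z k) (k : Fin (m + 1)) (hk : ∀ l ≤ k, z l = 1) : c k ≤ mixing c z := by
  induction m with
  | zero =>
    obtain rfl : k = 0 := Fin.fin_one_eq_zero k
    simp [mixing, hk 0 le_rfl]
  | succ m ih =>
    rw [mixing_succ]
    have h2 : c (Fin.last m).castSucc ≤ c (Fin.last _) := hc (Fin.le_last _)
    have ih' := ih (fun k => c k.castSucc) (fun k => z k.castSucc)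
      (hc.comp Fin.strictMono_castSucc.monotone) (fun k => hz _)
    induction k using Fin.lastCases with
    | last =>
      have h1 := ih' (Fin.last m) (fun l _ => hk _ (Fin.le_last _))
      rw [hk _ le_rfl]
      linarith
    | cast k =>
      have h1 := ih' k (fun l hl => hk _ (Fin.castSucc_le_castSucc_iff.2 hl))
      have h3 := mul_nonneg (sub_nonneg.2 h2) (hz (Fin.last _))
      linarith

lemma mixing_nonneg {m : ℕ} (c z : Fin (m + 1) → ℝ) (hc : Monotone c) (h0 : 0 ≤ c 0)
    (hz : ∀ k, 0 ≤ z k) : 0 ≤ mixing c z :=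
  add_nonneg (mul_nonneg h0 (hz 0)) (Finset.sum_nonneg fun k _ =>
    mul_nonneg (sub_nonneg.2 (hc k.castSucc_lt_succ.le)) (hz _))

/-- The 0/1 vectors whose coordinates are ordered compatibly with those of `x`. Up to the all-zero
and all-one vectors these are the indicators of the superlevel sets of `x`. -/
def thresholdVectors {d : ℕ} (x : Fin d → ℝ) : Set (Fin d → ℝ) :=
  {y | (∀ i, y i = 0 ∨ y i = 1) ∧ ∀ i j, x i ≤ x j → y i ≤ y j}

lemma finite_thresholdVectors {d : ℕ} (x : Fin d → ℝ) : (thresholdVectors x).Finite := by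
  refine (Set.Finite.pi' (fun _ : Fin d => Set.toFinite ({0, 1} : Set ℝ))).subset ?_
  intro y hy i
  simpa using hy.1 i

open MeasureTheory in
/-- A point of the cube is the average of its threshold vectors. The hull of a finite set is
closed, so it contains the average. -/
lemma mem_convexHull_thresholdVectors {d : ℕ} (x : Fin d → ℝ)
    (hx : ∀ i, 0 ≤ x i ∧ x i ≤ 1) : x ∈ convexHull ℝ (thresholdVectors x) := by
  let μ : Measure ℝ := volume.restrict (Set.Ioc 0 1)
  have : IsProbabilityMeasure μ := ⟨by simp [μ]⟩
  let g : ℝ → Fin d → ℝ := fun t i => (Set.Iic (x i)).indicator 1 t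
  have hint : ∀ i, Integrable (fun t => g t i) μ := fun i =>
    (integrable_const (1 : ℝ)).indicator measurableSet_Iic
  have hmem : ∫ t, g t ∂μ ∈ convexHull ℝ (thresholdVectors x) := by
    refine (convex_convexHull ℝ _).integral_mem ((finite_thresholdVectors x).isClosed_convexHull ℝ)
      (Filter.Eventually.of_forall fun t => subset_convexHull ℝ _ ⟨fun i => ?_, fun i j hij => ?_⟩)
      (Integrable.of_eval hint)
    · by_cases h : t ≤ x i <;> simp [g, Set.indicator, h]
    · by_cases h : t ≤ x i
      · simp [g, Set.indicator, h, h.trans hij]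
      · by_cases h' : t ≤ x j <;> simp [g, Set.indicator, h, h']
  convert hmem using 1
  funext i
  rw [eval_integral hint]
  simp only [g]
  rw [integral_indicator_one measurableSet_Iic, measureReal_restrict_apply measurableSet_Iic,
    show Set.Iic (x i) ∩ Set.Ioc 0 1 = Set.Ioc 0 (x i) by
      ext t
      have := (hx i).2
      simp only [Set.mem_inter_iff, Set.mem_Iic, Set.mem_Ioc]
      constructor
      · rintro ⟨h1, h2, _⟩
        exact ⟨h2, h1⟩
      · rintro ⟨h1, h2⟩
        exact ⟨h2, h1, h2.trans this⟩]
  simp [(hx i).1]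

/-- The records of `x` from the right, listed increasingly: they end at the last index, `x`
decreases along them, and each `j` is followed by a record with at least the value `x j`. -/
lemma exists_records {d : ℕ} (hd : 1 ≤ d) (x : Fin d → ℝ) :
    ∃ (m : ℕ) (idx : Fin (m + 1) → Fin d), StrictMono idx ∧
      ((idx (Fin.last m) : ℕ) = d - 1) ∧ (∀ k l, l ≤ k → x (idx k) ≤ x (idx l)) ∧
      ∀ j, ∃ k, j ≤ idx k ∧ x j ≤ x (idx k) := by
  classical
  let S : Finset (Fin d) := Finset.univ.filter fun i => ∀ j, i < j → x j < x i
  have hlast : (⟨d - 1, by omega⟩ : Fin d) ∈ S := by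
    simp only [S, Finset.mem_filter, Finset.mem_univ, true_and]
    intro j hj
    rw [Fin.lt_def] at hj
    simp only at hj
    omega
  obtain ⟨m, hm⟩ : ∃ m, S.card = m + 1 :=
    Nat.exists_eq_succ_of_ne_zero (Finset.card_ne_zero_of_mem hlast)
  have hsurj : ∀ i ∈ S, ∃ k, S.orderEmbOfFin hm k = i := by
    intro i hi
    have : i ∈ Set.range (S.orderEmbOfFin hm) := by
      rw [Finset.range_orderEmbOfFin]
      exact hi
    exact this
  refine ⟨m, S.orderEmbOfFin hm, (S.orderEmbOfFin hm).strictMono, ?_, ?_, ?_⟩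
  · obtain ⟨k, hk⟩ := hsurj _ hlast
    have h1 : S.orderEmbOfFin hm k ≤ S.orderEmbOfFin hm (Fin.last m) :=
      (S.orderEmbOfFin hm).monotone (Fin.le_last k)
    rw [hk, Fin.le_def] at h1
    simp only at h1
    omega
  · intro k l hlk
    rcases hlk.eq_or_lt with rfl | hlt
    · exact le_rfl
    · have h := Finset.orderEmbOfFin_mem S hm l
      simp only [S, Finset.mem_filter, Finset.mem_univ, true_and] at h
      exact (h _ ((S.orderEmbOfFin hm).strictMono hlt)).le
  · intro j
    -- The last index `i ≥ j` with `x j ≤ x i` is a record.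
    let A : Finset (Fin d) := Finset.univ.filter fun i => j ≤ i ∧ x j ≤ x i
    have hA : A.Nonempty := ⟨j, by simp [A]⟩
    have h1 := A.max'_mem hA
    have h2 : ∀ l ∈ A, l ≤ A.max' hA := fun l hl => A.le_max' l hl
    generalize A.max' hA = i at h1 h2
    simp only [A, Finset.mem_filter, Finset.mem_univ, true_and] at h1 h2
    obtain ⟨k, hk⟩ := hsurj i (by
      simp only [S, Finset.mem_filter, Finset.mem_univ, true_and]
      intro l hl
      by_contra! hcon
      exact absurd (h2 l ⟨h1.1.trans hl.le, h1.2.trans hcon⟩) (not_le.2 hl))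
    exact ⟨k, by rw [hk]; exact h1⟩

/-- The convex hull of the mixing set
`F = {(θ,x) ∈ ℝ × {0,1}^d : θ ≥ a_i x_i + b ∀i}` (with `0 ≤ a_1 ≤ … ≤ a_d`) is described by
the box constraints together with all mixing inequalities indexed by increasing sequences of
indices ending at the last index. -/
theorem stmt6 (d : ℕ) (hd : 1 ≤ d) (b : ℝ) (a : Fin d → ℝ)
    (hnonneg : ∀ i, 0 ≤ a i) (hmono : Monotone a) :
    convexHull ℝ {p : ℝ × (Fin d → ℝ) |
        (∀ i, p.2 i = 0 ∨ p.2 i = 1) ∧ ∀ i, p.1 ≥ a i * p.2 i + b}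
    = {p : ℝ × (Fin d → ℝ) | (∀ i, 0 ≤ p.2 i ∧ p.2 i ≤ 1) ∧
        ∀ (m : ℕ) (idx : Fin (m + 1) → Fin d), StrictMono idx →
          ((idx (Fin.last m) : ℕ) = d - 1) →
          p.1 ≥ a (idx 0) * p.2 (idx 0)
            + (∑ k : Fin m, (a (idx k.succ) - a (idx k.castSucc)) * p.2 (idx k.succ)) + b} := by
  apply Set.Subset.antisymm
  · refine convexHull_min ?_ ?_
    · rintro ⟨θ, x⟩ ⟨h01, hθ⟩
      simp only at h01 hθ
      refine ⟨fun i => by rcases h01 i with h | h <;> simp [h], ?_⟩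
      intro m idx hidx _
      have h := mixing_le (fun k => a (idx k)) (fun k => x (idx k)) (hmono.comp hidx.monotone)
        (hnonneg _) (fun k => h01 _) (θ - b) (fun k => by have := hθ (idx k); linarith)
      simp only [mixing] at h
      simp only
      linarith
    · rintro ⟨θ, x⟩ ⟨hx, hθ⟩ ⟨η, y⟩ ⟨hy, hη⟩ s t hs ht hst
      refine ⟨fun i => ?_, ?_⟩
      · exact (convex_Icc (0 : ℝ) 1) (hx i) (hy i) hs ht hst
      · intro m idx hidx hlast
        have h1 := mul_le_mul_of_nonneg_left (hθ m idx hidx hlast) hs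
        have h2 := mul_le_mul_of_nonneg_left (hη m idx hidx hlast) ht
        have h3 := mixing_comb (fun k => a (idx k)) (fun k => x (idx k)) (fun k => y (idx k)) s t
        have hb : s * b + t * b = b := by rw [← add_mul, hst, one_mul]
        simp only [mixing] at h3
        simp only [Prod.fst_add, Prod.snd_add, Prod.smul_fst, Prod.smul_snd, Pi.add_apply,
          Pi.smul_apply, smul_eq_mul, ge_iff_le] at h1 h2 ⊢
        linarith
  · rintro ⟨θ, x⟩ ⟨hx, hθ⟩
    obtain ⟨m, idx, hidx, hlast, hdec, hrec⟩ := exists_records hd x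
    have hc : Monotone fun k => a (idx k) := hmono.comp hidx.monotone
    let L : (Fin d → ℝ) → ℝ := fun y => mixing (fun k => a (idx k)) (fun k => y (idx k))
    have hr : b ≤ θ - L x := by
      have := hθ m idx hidx hlast
      simp only [L, mixing]
      simp only at this
      linarith
    generalize hF : {p : ℝ × (Fin d → ℝ) |
        (∀ i, p.2 i = 0 ∨ p.2 i = 1) ∧ ∀ i, p.1 ≥ a i * p.2 i + b} = F
    have key : convexHull ℝ (thresholdVectors x) ⊆
        {y | (L y + (θ - L x), y) ∈ convexHull ℝ F} := by
      refine convexHull_min ?_ ?_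
      · rintro y ⟨hy, hcomp⟩
        have hy0 : ∀ i, 0 ≤ y i := fun i => by rcases hy i with h | h <;> simp [h]
        refine subset_convexHull ℝ F ?_
        rw [← hF]
        refine ⟨hy, fun j => ?_⟩
        simp only
        rcases hy j with h | h
        · have : 0 ≤ L y := mixing_nonneg _ _ hc (hnonneg _) (fun k => hy0 _)
          rw [h]
          linarith
        · obtain ⟨k, hjk, hxk⟩ := hrec j
          have h1 : a (idx k) ≤ L y := le_mixing _ _ hc (fun k => hy0 _) k fun l hl => by
            have h2 := hcomp j (idx l) (hxk.trans (hdec k l hl))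
            rcases hy (idx l) with h3 | h3
            · linarith
            · exact h3
          have h2 := hmono hjk
          rw [h]
          linarith
      · intro y hy z hz s t hs ht hst
        have h := convex_convexHull ℝ F hy hz hs ht hst
        have h3 : L (s • y + t • z) = s * L y + t * L z := mixing_comb _ _ _ s t
        have h4 : s * (θ - L x) + t * (θ - L x) = θ - L x := by rw [← add_mul, hst, one_mul]
        rw [Set.mem_ofPred_eq]
        convert h using 1
        ext1
        · simp only [Prod.fst_add, Prod.smul_fst, smul_eq_mul, h3]
          linarith
        · rfl
    have := key (mem_convexHull_thresholdVectors x hx)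
    simpa using this
end

section
/- Let d ≥ 1, b ∈ ℝ, and a ∈ ℝ^d with 0 ≤ a_1 ≤ a_2 ≤ … ≤ a_d. Let x ∈ {0,1}^d and θ ∈ ℝ satisfy θ ≥ a_i x_i + b for all i ∈ {1,…,d}. Then for every finite increasing sequence of indices 1 ≤ i_1 < i_2 < … < i_m = d, the mixing inequality holds: θ ≥ a_{i_1} x_{i_1} + ∑_{k=2}^m (a_{i_k} − a_{i_{k−1}}) x_{i_k} + b. -/
/-!
Write `S` for the right-hand side of the mixing inequality without `b`. By induction on the length
of the index sequence, `S ≤ θ - b` and `S ≤ a (last index)` hold simultaneously. When a new last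
index `j` is appended after `i`: if `x j = 0` then `S` is unchanged and `a i ≤ a j`; if `x j = 1`
then the new value is `S + (a j - a i) ≤ a j = a j * x j ≤ θ - b`.
-/

/-- The second conjunct is the strengthening that makes the induction on `m` go through. -/
lemma mixing_sum_le {d : ℕ} {b : ℝ} {a : Fin d → ℝ}
    (hnonneg : ∀ i, 0 ≤ a i) (hmono : Monotone a)
    {x : Fin d → ℝ} (hx : ∀ i, x i = 0 ∨ x i = 1)
    {θ : ℝ} (hθ : ∀ i, θ ≥ a i * x i + b) (m : ℕ) (idx : Fin (m + 1) → Fin d)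
    (hidx : Monotone idx) :
    a (idx 0) * x (idx 0)
        + (∑ k : Fin m, (a (idx k.succ) - a (idx k.castSucc)) * x (idx k.succ)) ≤ θ - b ∧
    a (idx 0) * x (idx 0)
        + (∑ k : Fin m, (a (idx k.succ) - a (idx k.castSucc)) * x (idx k.succ))
          ≤ a (idx (Fin.last m)) := by
  induction m with
  | zero =>
    have h := hθ (idx 0)
    have h0 := hnonneg (idx 0)
    simp only [Finset.univ_eq_empty, Finset.sum_empty, add_zero, Fin.last_zero]
    refine ⟨by linarith, ?_⟩
    rcases hx (idx 0) with hx0 | hx0 <;> simp [hx0, h0]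
  | succ m ih =>
    obtain ⟨ih₁, ih₂⟩ := ih (fun k => idx k.castSucc)
      (fun _ _ h => hidx (Fin.castSucc_le_castSucc_iff.mpr h))
    have hstep : a (idx (Fin.last m).castSucc) ≤ a (idx (Fin.last (m + 1))) :=
      hmono (hidx (Fin.le_last _))
    have h := hθ (idx (Fin.last (m + 1)))
    rw [Fin.sum_univ_castSucc]
    simp only [Fin.succ_castSucc, Fin.succ_last, Fin.castSucc_zero] at ih₁ ih₂ ⊢
    rcases hx (idx (Fin.last (m + 1))) with hx0 | hx0 <;>
      simp only [Nat.succ_eq_add_one, hx0, mul_zero, mul_one, add_zero] at h ⊢ <;>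
      constructor <;> linarith

/-- Validity of the mixing inequalities: any `(θ, x)` with `x ∈ {0,1}^d` and
`θ ≥ a_i x_i + b` for all `i` satisfies every mixing inequality indexed by an increasing
sequence of indices ending at the last index. -/
theorem stmt7 (d : ℕ) (hd : 1 ≤ d) (b : ℝ) (a : Fin d → ℝ)
    (hnonneg : ∀ i, 0 ≤ a i) (hmono : Monotone a)
    (x : Fin d → ℝ) (hx : ∀ i, x i = 0 ∨ x i = 1)
    (θ : ℝ) (hθ : ∀ i, θ ≥ a i * x i + b) :
    ∀ (m : ℕ) (idx : Fin (m + 1) → Fin d), StrictMono idx →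
      ((idx (Fin.last m) : ℕ) = d - 1) →
      θ ≥ a (idx 0) * x (idx 0)
        + (∑ k : Fin m, (a (idx k.succ) - a (idx k.castSucc)) * x (idx k.succ)) + b := by
  intro m idx hidx _
  have h := (mixing_sum_le hnonneg hmono hx hθ m idx hidx.monotone).1
  linarith
end

section
/- Let G = (V, E) be a finite simple undirected graph and let k be a nonnegative integer. Then G has a vertex cover of size at most k (i.e., a set C ⊆ V with |C| ≤ k such that every edge of G has at least one endpoint in C) if and only if there exist x ∈ {0,1}^V and θ ∈ ℝ such that θ ≥ −1, θ ≥ −x_u − x_v for every edge {u,v} ∈ E, and ∑_{v∈V} x_v + (k+1)θ ≤ −1. -/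
/-!
A cover `C` yields the indicator vector of `C` with `θ = -1`. Conversely, from a feasible `(x, θ)`
take `C = {v | x v = 1}`: since `∑ x ≥ 0`, the budget inequality forces `θ < 0`, so no edge has both
endpoint values `0` and `C` is a cover; since `θ ≥ -1`, the same inequality gives `|C| = ∑ x ≤ k`.
-/

open Finset

/-- Correctness of the vertex-cover reduction: a finite simple graph `G` has a
vertex cover of size at most `k` iff there exist `x ∈ {0,1}^V` and `θ ∈ ℝ` with `θ ≥ -1`,
`θ ≥ -x_u - x_v` for every edge `uv`, and `∑_v x_v + (k+1)θ ≤ -1`. -/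
theorem stmt8 {V : Type*} [Fintype V] [DecidableEq V] (G : SimpleGraph V) (k : ℕ) :
    (∃ C : Finset V, C.card ≤ k ∧ ∀ u v : V, G.Adj u v → u ∈ C ∨ v ∈ C) ↔
    (∃ (x : V → ℝ) (θ : ℝ), (∀ v, x v = 0 ∨ x v = 1) ∧ θ ≥ -1 ∧
      (∀ u v : V, G.Adj u v → θ ≥ -x u - x v) ∧
      (∑ v, x v) + (k + 1 : ℝ) * θ ≤ -1) := by
  constructor
  · rintro ⟨C, hC, hcov⟩
    refine ⟨fun v => if v ∈ C then 1 else 0, -1, fun v => ?_, le_rfl, fun u v huv => ?_, ?_⟩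
    · by_cases hv : v ∈ C <;> simp [hv]
    · rcases hcov u v huv with h | h
      · by_cases hv : v ∈ C <;> simp [h, hv]
      · by_cases hu : u ∈ C <;> simp [h, hu]
    · have hC' : (C.card : ℝ) ≤ k := by exact_mod_cast hC
      have hsum : (∑ v, if v ∈ C then (1 : ℝ) else 0) = C.card := by simp
      rw [hsum]
      linarith
  · rintro ⟨x, θ, hx, hθ, hedge, hbudget⟩
    have hk : (0 : ℝ) ≤ k := Nat.cast_nonneg k
    have hsum : ∑ v, x v = ((univ.filter fun v => x v = 1).card : ℝ) := by
      rw [← Finset.sum_boole]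
      refine Finset.sum_congr rfl fun v _ => ?_
      rcases hx v with h | h <;> simp [h]
    refine ⟨univ.filter fun v => x v = 1, ?_, fun u v huv => ?_⟩
    · have : ((univ.filter fun v => x v = 1).card : ℝ) ≤ k := by
        rw [← hsum]
        nlinarith
      exact_mod_cast this
    · by_contra! hcon
      simp only [mem_filter, mem_univ, true_and] at hcon
      have hu := (hx u).resolve_right hcon.1
      have hv := (hx v).resolve_right hcon.2
      have hθ0 : 0 ≤ θ := by
        have := hedge u v huv
        rw [hu, hv] at this
        linarith
      have hsum0 : 0 ≤ ∑ v, x v := by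
        rw [hsum]
        positivity
      have : 0 ≤ (k + 1 : ℝ) * θ := by positivity
      linarith
end

section
/- Let n ≥ 1, a ∈ ℝ^n with a ≥ 0 componentwise, c ∈ ℝ^n with c ≥ 0 componentwise, b ∈ ℝ, and d > 0. For x ∈ ℝ^n define Q(x) as the infimum of aᵀz + b·y over all (y, z) ∈ ℝ × ℝ^n satisfying z_i − y ≤ 0, (c_i + d)·z_i ≤ x_i, and d·(y − z_i) ≤ 1 − x_i for all i ∈ {1,…,n}, together with cᵀz + d·y = 1, z ≥ 0, and y ≥ 0. Then for every x ∈ {0,1}^n, Q(x) = (aᵀx + b)/(cᵀx + d). -/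
/-!
At a binary point `x` the linear program has exactly one feasible point. If `x i = 0`, then
`(c i + d) * z i ≤ 0` forces `z i = 0`; if `x i = 1`, then `d * (y - z i) ≤ 0` together with
`z i ≤ y` forces `z i = y`. Hence `z = y • x`, and the normalisation `cᵀz + d y = 1` gives
`y = 1 / (cᵀx + d)`. This point is feasible because `c i + d ≤ cᵀx + d` whenever `x i = 1`.
So the set of objective values is a singleton, and its infimum is the claimed quotient.
-/

/-- The LP value-function extension of the fractional objective agrees with
`(aᵀx + b)/(cᵀx + d)` at every binary point `x ∈ {0,1}^n`. -/
theorem stmt17 (n : ℕ) (hn : 1 ≤ n) (a : Fin n → ℝ) (ha : ∀ i, 0 ≤ a i)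
    (c : Fin n → ℝ) (hc : ∀ i, 0 ≤ c i) (b : ℝ) (d : ℝ) (hd : 0 < d) :
    ∀ x : Fin n → ℝ, (∀ i, x i = 0 ∨ x i = 1) →
      sInf {t : ℝ | ∃ (y : ℝ) (z : Fin n → ℝ),
          (∀ i, z i - y ≤ 0 ∧ (c i + d) * z i ≤ x i ∧ d * (y - z i) ≤ 1 - x i) ∧
          (∑ i, c i * z i) + d * y = 1 ∧ (∀ i, 0 ≤ z i) ∧ 0 ≤ y ∧
          t = (∑ i, a i * z i) + b * y}
      = ((∑ i, a i * x i) + b) / ((∑ i, c i * x i) + d) := by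
  intro x hx
  have hx0 : ∀ i, 0 ≤ x i := fun i => by rcases hx i with h | h <;> simp [h]
  have hcx : ∀ i, 0 ≤ c i * x i := fun i => mul_nonneg (hc i) (hx0 i)
  have hS : 0 ≤ ∑ i, c i * x i := Finset.sum_nonneg fun i _ => hcx i
  have hle : ∀ i, c i * x i ≤ ∑ j, c j * x j := fun i =>
    Finset.single_le_sum (f := fun j => c j * x j) (fun j _ => hcx j) (Finset.mem_univ i)
  have hsum : ∀ (w : Fin n → ℝ) (y : ℝ), ∑ i, w i * (x i * y) = (∑ i, w i * x i) * y := by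
    intro w y
    rw [Finset.sum_mul]
    exact Finset.sum_congr rfl fun i _ => by ring
  set S := ∑ i, c i * x i with hSdef
  have hD : 0 < S + d := by linarith
  rw [← csInf_singleton (((∑ i, a i * x i) + b) / (S + d))]
  congr 1
  ext t
  simp only [Set.mem_setOf_eq, Set.mem_singleton_iff]
  constructor
  · rintro ⟨y, z, h, hn1, hz, hy, rfl⟩
    have hzx : ∀ i, z i = x i * y := by
      intro i
      obtain ⟨h1, h2, h3⟩ := h i
      rcases hx i with hi | hi
      · rw [hi] at h2 ⊢
        have hp : 0 < c i + d := by linarith [hc i]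
        have : z i ≤ 0 := nonpos_of_mul_nonpos_right h2 hp
        linarith [hz i]
      · rw [hi] at h3 ⊢
        have : y - z i ≤ 0 := nonpos_of_mul_nonpos_right (by linarith) hd
        linarith
    simp only [hzx, hsum] at hn1 ⊢
    rw [← hSdef] at hn1
    rw [eq_div_iff hD.ne']
    linear_combination ((∑ i, a i * x i) + b) * hn1
  · rintro rfl
    have hy : 0 ≤ (S + d)⁻¹ := (inv_pos.mpr hD).le
    have hone : (S + d) * (S + d)⁻¹ = 1 := mul_inv_cancel₀ hD.ne'
    refine ⟨(S + d)⁻¹, fun i => x i * (S + d)⁻¹, fun i => ?_, ?_,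
      fun i => mul_nonneg (hx0 i) hy, hy, ?_⟩
    · rcases hx i with hi | hi
      · have := mul_nonneg hS hy
        simp only [hi]
        refine ⟨by linarith, by simp, by linarith⟩
      · have hi' := hle i
        rw [hi, mul_one] at hi'
        have := mul_nonneg (sub_nonneg.mpr hi') hy
        simp only [hi]
        refine ⟨by linarith, by linarith, by linarith⟩
    · rw [hsum, ← hSdef]
      linarith
    · rw [hsum]
      ring
end
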